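/- Consider the coordination game without bonuses on the partition-cycle with nodes V = {1,…,8}, cyclic edges E_c = {1→2, 2→3, 3→4, 4→5, 5→6, 6→7, 7→8, 8→1}, cross-edges E_p = {1→6, 2→6, 3→8, 4→7}, colour sets C(1) = {b,c}, C(2) = {b,c}, C(3) = {b}, C(4) = {c}, C(5) = {a}, C(6) = {a,b}, C(7) = {a,c}, C(8) = {b,c} for three distinct colours a, b, c, and weights equal to 2 on the edges 6 → 7 and 7 → 8 and equal to 1 on all other edges. This game has no Nash equilibrium. -/

import Mathlib

open scoped Classical

namespace CG

/-- Payoff of node `i` in a coordination game on a weighted directed graph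
with adjacency `adj` (an edge `j → i` is `adj j i`), edge weights `w`,
bonuses `β`, under the joint strategy `s`. -/
noncomputable def payoff {V M : Type} [Fintype V] (adj : V → V → Prop)
    (w : V → V → ℝ) (β : V → M → ℕ) (s : V → M) (i : V) : ℝ :=
  (∑ j ∈ Finset.univ.filter (fun j => adj j i ∧ s j = s i), w j i) + (β i (s i) : ℝ)

/-- A joint strategy assigns to every node a colour from its colour set. -/
def Valid {V M : Type} (C : V → Finset M) (s : V → M) : Prop :=
  ∀ i, s i ∈ C i

/-- `s'` is a profitable deviation of the (non-empty) coalition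
`K = {i | s i ≠ s' i}` from `s`. -/
def ProfDev {V M : Type} [Fintype V] (adj : V → V → Prop) (w : V → V → ℝ)
    (β : V → M → ℕ) (C : V → Finset M) (s s' : V → M) : Prop :=
  Valid C s' ∧ s ≠ s' ∧
    ∀ i, s i ≠ s' i → payoff adj w β s i < payoff adj w β s' i

/-- A profitable deviation of a single player. -/
def UniDev {V M : Type} [Fintype V] (adj : V → V → Prop) (w : V → V → ℝ)
    (β : V → M → ℕ) (C : V → Finset M) (s s' : V → M) : Prop :=
  ProfDev adj w β C s s' ∧ ∃ i, ∀ j, j ≠ i → s j = s' j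

/-- A Nash equilibrium: no single player has a profitable deviation. -/
def IsNash {V M : Type} [Fintype V] (adj : V → V → Prop) (w : V → V → ℝ)
    (β : V → M → ℕ) (C : V → Finset M) (s : V → M) : Prop :=
  Valid C s ∧ ∀ s', ¬ UniDev adj w β C s s'

/-- A strong equilibrium: no coalition has a profitable deviation. -/
def IsStrong {V M : Type} [Fintype V] (adj : V → V → Prop) (w : V → V → ℝ)
    (β : V → M → ℕ) (C : V → Finset M) (s : V → M) : Prop :=
  Valid C s ∧ ∀ s', ¬ ProfDev adj w β C s s'

/-- There is a finite improvement path of length `L` starting at `s`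
(each step a profitable single-player deviation) ending in a Nash equilibrium. -/
def ImpPath {V M : Type} [Fintype V] (adj : V → V → Prop) (w : V → V → ℝ)
    (β : V → M → ℕ) (C : V → Finset M) (s : V → M) (L : ℕ) : Prop :=
  ∃ σ : ℕ → V → M, σ 0 = s ∧
    (∀ t, t < L → UniDev adj w β C (σ t) (σ (t + 1))) ∧
    IsNash adj w β C (σ L)

/-- There is a finite c-improvement path of length `L` starting at `s`
(each step a profitable coalition deviation) ending in a strong equilibrium. -/
def CImpPath {V M : Type} [Fintype V] (adj : V → V → Prop) (w : V → V → ℝ)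
    (β : V → M → ℕ) (C : V → Finset M) (s : V → M) (L : ℕ) : Prop :=
  ∃ σ : ℕ → V → M, σ 0 = s ∧
    (∀ t, t < L → ProfDev adj w β C (σ t) (σ (t + 1))) ∧
    IsStrong adj w β C (σ L)

/-- Adjacency of the simple cycle `1 → 2 → ⋯ → n → 1` on `Fin n`. -/
def cycAdj (n : ℕ) : Fin n → Fin n → Prop :=
  fun i j => (i.val + 1) % n = j.val

/-- Adjacency of a partition-cycle on `Fin n`: the cyclic edges
`i → i+1 (mod n)` together with the cross-edges `Ep`. -/
def pcAdj (n : ℕ) (Ep : Finset (Fin n × Fin n)) : Fin n → Fin n → Prop :=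
  fun i j => (i.val + 1) % n = j.val ∨ (i, j) ∈ Ep

/-- A partition-cycle on `Fin n` with top part `V_T = {i | i.val < k}`
(of size `k`, `1 ≤ k < n`) and bottom part `V_B = {i | k ≤ i.val}`:
the cross-edges `Ep` go from `V_T` to `V_B` and are not cyclic edges. -/
def IsPartitionCycle (n k : ℕ) (Ep : Finset (Fin n × Fin n)) : Prop :=
  1 ≤ k ∧ k < n ∧
  (∀ e ∈ Ep, e.1.val < k ∧ k ≤ e.2.val) ∧
  (∀ e ∈ Ep, (e.1.val + 1) % n ≠ e.2.val)

/-- The cross-edges of Example 7 (`0`-based labels: paper node `i` is `i - 1`):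
`1 → 6, 2 → 6, 3 → 8, 4 → 7`. -/
def crossEx19 : Finset (Fin 8 × Fin 8) :=
  {(0, 5), (1, 5), (2, 7), (3, 6)}

/-- Weights of Example 7: `2` on the edges `6 → 7` and `7 → 8`, `1` elsewhere. -/
noncomputable def weightEx19 : Fin 8 → Fin 8 → ℝ := fun i j =>
  if (i, j) ∈ ({(5, 6), (6, 7)} : Finset (Fin 8 × Fin 8)) then 2 else 1

/-- Colour sets of Example 7: `C(1) = {b,c}`, `C(2) = {b,c}`, `C(3) = {b}`,
`C(4) = {c}`, `C(5) = {a}`, `C(6) = {a,b}`, `C(7) = {a,c}`, `C(8) = {b,c}`. -/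
def colEx19 {M : Type} [DecidableEq M] (a b c : M) : Fin 8 → Finset M := fun i =>
  if i = 0 then {b, c} else if i = 1 then {b, c} else if i = 2 then {b}
    else if i = 3 then {c} else if i = 4 then {a} else if i = 5 then {a, b}
    else if i = 6 then {a, c} else {b, c}

/-!
In an equilibrium nodes `1` and `2` copy node `8`, so these two in-neighbours of node `6`, which
together outweigh node `5`, carry the colour of node `8`. At each of the nodes `6`, `7`, `8` the
heavy in-neighbours prevail when their colour is available, and otherwise the light one does. Hence
`8` on `b` puts `6` on `b`, so `7` on `c`, so `8` on `c`; and `8` on `c` puts `6` on `a`, so `7` on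
`a`, so `8` on `b`. (Nodes are numbered from `1` here, as in the paper, and from `0` in the code.)
-/

section BestReply

variable {V M : Type} [Fintype V] {adj : V → V → Prop} {w : V → V → ℝ} {β : V → M → ℕ}
  {C : V → Finset M} {s : V → M} {i : V}

/-- The payoff that colour `d` earns node `i` when the other nodes play `s`. It agrees with the
payoff after a deviation only if `i` has no self-loop, since `s i` is not replaced by `d`. -/
noncomputable def choicePayoff (adj : V → V → Prop) (w : V → V → ℝ) (β : V → M → ℕ)
    (s : V → M) (i : V) (d : M) : ℝ :=
  (∑ j with adj j i ∧ s j = d, w j i) + β i d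

/-- Node `i` plays a best reply in `s`: none of its colours earns it more than `s i` does. A joint
strategy is a Nash equilibrium when every node plays a best reply. -/
def IsBestReply [DecidableEq V] (adj : V → V → Prop) (w : V → V → ℝ) (β : V → M → ℕ)
    (C : V → Finset M) (s : V → M) (i : V) : Prop :=
  ∀ d ∈ C i, payoff adj w β (Function.update s i d) i ≤ payoff adj w β s i

theorem payoff_update_eq_choicePayoff [DecidableEq V] (hi : ¬ adj i i) (d : M) :
    payoff adj w β (Function.update s i d) i = choicePayoff adj w β s i d := by
  have hfilter : ∀ j, adj j i ∧ Function.update s i d j = d ↔ adj j i ∧ s j = d := fun j =>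
    and_congr_right fun hj => by
      rw [Function.update_of_ne (ne_of_apply_ne (adj · i) fun h => hi (h ▸ hj))]
  simp only [payoff, choicePayoff, Function.update_self, hfilter]

theorem IsBestReply.eq_of_forall_choicePayoff_lt [DecidableEq V]
    (h : IsBestReply adj w β C s i) (hi : ¬ adj i i) (hs : s i ∈ C i) {d : M} (hd : d ∈ C i)
    (hlt : ∀ d' ∈ C i, d' ≠ d → choicePayoff adj w β s i d' < choicePayoff adj w β s i d) :
    s i = d := by
  by_contra hne
  exact (payoff_update_eq_choicePayoff hi d ▸ h d hd).not_gt (hlt (s i) hs hne)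

theorem IsBestReply.eq_of_forall_notMem [DecidableEq V]
    (h : IsBestReply adj w (fun _ _ => 0) C s i) (hi : ¬ adj i i) (hs : s i ∈ C i) {k : V}
    (hk : adj k i) (hw : 0 < w k i) (hd : s k ∈ C i)
    (hothers : ∀ j, adj j i → j ≠ k → s j ∉ C i) : s i = s k := by
  have eq_of_mem {j : V} (hj : adj j i) (hjC : s j ∈ C i) : j = k :=
    by_contra fun hjk => hothers j hj hjk hjC
  refine h.eq_of_forall_choicePayoff_lt hi hs hd fun d' hd' hne => ?_
  have support_d' : ({j | adj j i ∧ s j = d'} : Finset V) = ∅ :=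
    Finset.filter_eq_empty_iff.2 fun j _ ⟨hj, hjd⟩ =>
      hne (by rw [← hjd, eq_of_mem hj (hjd ▸ hd')])
  have support_k : ({j | adj j i ∧ s j = s k} : Finset V) = {k} := by
    ext j
    simp only [Finset.mem_filter_univ, Finset.mem_singleton]
    exact ⟨fun ⟨hj, hjk⟩ => eq_of_mem hj (hjk ▸ hd), fun hjk => ⟨hjk ▸ hk, congrArg s hjk⟩⟩
  simpa [choicePayoff, support_d', support_k] using hw

theorem IsBestReply.eq_of_sum_lt_sum [DecidableEq V]
    (h : IsBestReply adj w (fun _ _ => 0) C s i) (hi : ¬ adj i i) (hs : s i ∈ C i)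
    (hw : ∀ j, adj j i → 0 ≤ w j i) {d : M} (hd : d ∈ C i) {N R : Finset V}
    (hNR : ∀ j, adj j i ↔ j ∈ N ∨ j ∈ R) (hN : ∀ j ∈ N, s j = d)
    (hlt : ∑ j ∈ R, w j i < ∑ j ∈ N, w j i) : s i = d := by
  refine h.eq_of_forall_choicePayoff_lt hi hs hd fun d' _ hne => ?_
  have le_rest : ∑ j with adj j i ∧ s j = d', w j i ≤ ∑ j ∈ R, w j i := by
    refine Finset.sum_le_sum_of_subset_of_nonneg (fun j hj => ?_)
      fun j hj _ => hw j ((hNR j).2 (.inr hj))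
    obtain ⟨hadj, hjd⟩ := (Finset.mem_filter_univ j).1 hj
    exact ((hNR j).1 hadj).resolve_left fun hjN => hne (hjd ▸ hN j hjN)
  have supporters_le : ∑ j ∈ N, w j i ≤ ∑ j with adj j i ∧ s j = d, w j i :=
    Finset.sum_le_sum_of_subset_of_nonneg
      (fun j hj => (Finset.mem_filter_univ j).2 ⟨(hNR j).2 (.inl hj), hN j hj⟩)
      fun j hj _ => hw j ((Finset.mem_filter_univ j).1 hj).1
  simpa [choicePayoff] using le_rest.trans_lt (hlt.trans_le supporters_le)

end BestReply

theorem pcAdj_crossEx19_iff (j i : Fin 8) :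
    pcAdj 8 crossEx19 j i ↔
      j ∈ (![{7}, {0}, {1}, {2}, {3}, {0, 1, 4}, {3, 5}, {2, 6}] : Fin 8 → Finset (Fin 8)) i := by
  revert j i
  unfold pcAdj
  decide

theorem not_pcAdj_crossEx19_self (i : Fin 8) : ¬ pcAdj 8 crossEx19 i i := by
  revert i
  unfold pcAdj
  decide

theorem weightEx19_nonneg (j i : Fin 8) : 0 ≤ weightEx19 j i := by
  unfold weightEx19
  split_ifs <;> norm_num

section Example

variable {M : Type} [DecidableEq M] {a b c : M} {w : Fin 8 → Fin 8 → ℝ} {s : Fin 8 → M}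

theorem Valid.apply_two (hs : Valid (colEx19 a b c) s) : s 2 = b := by
  simpa [colEx19] using hs 2

theorem Valid.apply_three (hs : Valid (colEx19 a b c) s) : s 3 = c := by
  simpa [colEx19] using hs 3

theorem Valid.apply_four (hs : Valid (colEx19 a b c) s) : s 4 = a := by
  simpa [colEx19] using hs 4

/-- Node `i` plays a best reply in the game of Example 7, with the weights of the example replaced
by arbitrary ones. -/
abbrev IsBestReplyEx19 (a b c : M) (w : Fin 8 → Fin 8 → ℝ) (s : Fin 8 → M) (i : Fin 8) : Prop :=
  IsBestReply (pcAdj 8 crossEx19) w (fun _ _ => 0) (colEx19 a b c) s i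

namespace IsBestReplyEx19

theorem apply_zero (h : IsBestReplyEx19 a b c w s 0) (hs : Valid (colEx19 a b c) s)
    (hpos : 0 < w 7 0) : s 0 = s 7 :=
  h.eq_of_forall_notMem (not_pcAdj_crossEx19_self 0) (hs 0) (by simp [pcAdj_crossEx19_iff]) hpos
    (by simpa [colEx19] using hs 7) (by simp [pcAdj_crossEx19_iff])

theorem apply_one (h : IsBestReplyEx19 a b c w s 1) (hs : Valid (colEx19 a b c) s)
    (hpos : 0 < w 0 1) : s 1 = s 0 :=
  h.eq_of_forall_notMem (not_pcAdj_crossEx19_self 1) (hs 1) (by simp [pcAdj_crossEx19_iff]) hpos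
    (by simpa [colEx19] using hs 0) (by simp [pcAdj_crossEx19_iff])

theorem apply_five_eq_b (h : IsBestReplyEx19 a b c w s 5) (hs : Valid (colEx19 a b c) s)
    (hw : ∀ j, pcAdj 8 crossEx19 j 5 → 0 ≤ w j 5) (hlt : w 4 5 < w 0 5 + w 1 5)
    (h0 : s 0 = b) (h1 : s 1 = b) : s 5 = b :=
  h.eq_of_sum_lt_sum (N := {0, 1}) (R := {4}) (not_pcAdj_crossEx19_self 5) (hs 5) hw
    (by simp [colEx19]) (by simp [pcAdj_crossEx19_iff, or_assoc]) (by simp [h0, h1]) (by simpa)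

theorem apply_five_eq_a (h : IsBestReplyEx19 a b c w s 5) (hs : Valid (colEx19 a b c) s)
    (hac : a ≠ c) (hbc : b ≠ c) (hpos : 0 < w 4 5) (h0 : s 0 = c) (h1 : s 1 = c) : s 5 = a :=
  hs.apply_four ▸ h.eq_of_forall_notMem (not_pcAdj_crossEx19_self 5) (hs 5)
    (by simp [pcAdj_crossEx19_iff]) hpos (by simp [colEx19, hs.apply_four])
    (by simp [pcAdj_crossEx19_iff, colEx19, h0, h1, hac.symm, hbc.symm])

theorem apply_six_eq_a (h : IsBestReplyEx19 a b c w s 6) (hs : Valid (colEx19 a b c) s)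
    (hw : ∀ j, pcAdj 8 crossEx19 j 6 → 0 ≤ w j 6) (hlt : w 3 6 < w 5 6) (h5 : s 5 = a) :
    s 6 = a :=
  h.eq_of_sum_lt_sum (N := {5}) (R := {3}) (not_pcAdj_crossEx19_self 6) (hs 6) hw
    (by simp [colEx19]) (by simp [pcAdj_crossEx19_iff, or_comm]) (by simp [h5]) (by simpa)

theorem apply_six_eq_c (h : IsBestReplyEx19 a b c w s 6) (hs : Valid (colEx19 a b c) s)
    (hab : a ≠ b) (hbc : b ≠ c) (hpos : 0 < w 3 6) (h5 : s 5 = b) : s 6 = c :=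
  hs.apply_three ▸ h.eq_of_forall_notMem (not_pcAdj_crossEx19_self 6) (hs 6)
    (by simp [pcAdj_crossEx19_iff]) hpos (by simp [colEx19, hs.apply_three])
    (by simp [pcAdj_crossEx19_iff, colEx19, h5, hab.symm, hbc])

theorem apply_seven_eq_c (h : IsBestReplyEx19 a b c w s 7) (hs : Valid (colEx19 a b c) s)
    (hw : ∀ j, pcAdj 8 crossEx19 j 7 → 0 ≤ w j 7) (hlt : w 2 7 < w 6 7) (h6 : s 6 = c) :
    s 7 = c :=
  h.eq_of_sum_lt_sum (N := {6}) (R := {2}) (not_pcAdj_crossEx19_self 7) (hs 7) hw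
    (by simp [colEx19]) (by simp [pcAdj_crossEx19_iff, or_comm]) (by simp [h6]) (by simpa)

theorem apply_seven_eq_b (h : IsBestReplyEx19 a b c w s 7) (hs : Valid (colEx19 a b c) s)
    (hab : a ≠ b) (hac : a ≠ c) (hpos : 0 < w 2 7) (h6 : s 6 = a) : s 7 = b :=
  hs.apply_two ▸ h.eq_of_forall_notMem (not_pcAdj_crossEx19_self 7) (hs 7)
    (by simp [pcAdj_crossEx19_iff]) hpos (by simp [colEx19, hs.apply_two])
    (by simp [pcAdj_crossEx19_iff, colEx19, h6, hab, hac])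

end IsBestReplyEx19

end Example

theorem partition_cycle_weighted_no_nash_general
    {M : Type} [DecidableEq M] {a b c : M} (hab : a ≠ b) (hbc : b ≠ c) (hac : a ≠ c)
    {w : Fin 8 → Fin 8 → ℝ} (hw : ∀ j i, pcAdj 8 crossEx19 j i → 0 ≤ w j i)
    (h70 : 0 < w 7 0) (h01 : 0 < w 0 1)
    (h45 : 0 < w 4 5) (h45_lt : w 4 5 < w 0 5 + w 1 5)
    (h36 : 0 < w 3 6) (h36_lt : w 3 6 < w 5 6)
    (h27 : 0 < w 2 7) (h27_lt : w 2 7 < w 6 7)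
    (s : Fin 8 → M) (hs : Valid (colEx19 a b c) s) :
    ∃ i : Fin 8, ∃ d ∈ colEx19 a b c i,
      payoff (pcAdj 8 crossEx19) w (fun _ _ => 0) s i <
        payoff (pcAdj 8 crossEx19) w (fun _ _ => 0) (Function.update s i d) i := by
  by_contra! hstable
  have hbest : ∀ i, IsBestReplyEx19 a b c w s i := hstable
  have h0 : s 0 = s 7 := (hbest 0).apply_zero hs h70
  have h1 : s 1 = s 7 := ((hbest 1).apply_one hs h01).trans h0
  have h7 : s 7 = b ∨ s 7 = c := by simpa [colEx19] using hs 7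
  rcases h7 with h7b | h7c
  · have h5 : s 5 = b :=
      (hbest 5).apply_five_eq_b hs (hw · 5) h45_lt (h0.trans h7b) (h1.trans h7b)
    have h6 : s 6 = c := (hbest 6).apply_six_eq_c hs hab hbc h36 h5
    have h7c : s 7 = c := (hbest 7).apply_seven_eq_c hs (hw · 7) h27_lt h6
    exact hbc (h7b.symm.trans h7c)
  · have h5 : s 5 = a :=
      (hbest 5).apply_five_eq_a hs hac hbc h45 (h0.trans h7c) (h1.trans h7c)
    have h6 : s 6 = a := (hbest 6).apply_six_eq_a hs (hw · 6) h36_lt h5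
    have h7b : s 7 = b := (hbest 7).apply_seven_eq_b hs hab hac h27 h6
    exact hbc (h7b.symm.trans h7c)

/-- The coordination game without bonuses on the partition-cycle of Example 7
(with distinct colours `a, b, c`, cyclic edges `1 → 2 → ⋯ → 8 → 1`,
cross-edges `1 → 6, 2 → 6, 3 → 8, 4 → 7`, and weight `2` on the edges
`6 → 7` and `7 → 8`, weight `1` elsewhere) has no Nash equilibrium: in every
joint strategy some player can strictly improve by switching to another of
his colours. -/
theorem partition_cycle_weighted_no_nash
    {M : Type} [Fintype M] [DecidableEq M] (a b c : M)
    (hab : a ≠ b) (hbc : b ≠ c) (hac : a ≠ c) :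
    ∀ s : Fin 8 → M, Valid (colEx19 a b c) s →
      ∃ i : Fin 8, ∃ d ∈ colEx19 a b c i,
        payoff (pcAdj 8 crossEx19) weightEx19 (fun _ _ => 0) s i <
          payoff (pcAdj 8 crossEx19) weightEx19 (fun _ _ => 0)
            (Function.update s i d) i := by
  apply partition_cycle_weighted_no_nash_general hab hbc hac fun j i _ => weightEx19_nonneg j i
  all_goals simp [weightEx19]

end CG
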